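/- arXiv:1201.1073 — 4 statements merged into one kernel-verified Lean document; each statement's English description precedes it below -/
import Mathlib

section
/- Let Ω be a non-empty closed discrete subset of ℂ which is stable under addition, with 0 ∉ Ω. Let δ, δ′ > 0 with δ′ < δ/2, let J = [a,b] be a compact interval, and let γ : J → ℂ be a piecewise C¹ path with 0 ∉ γ(J) and γ(J) ⊂ ℂ∖Ω_δ. Suppose h : [0,1] → ℂ is a C¹ path with h(0) = 0, h([0,1]) ⊂ ℂ∖Ω_{δ′}, h(1−s) = h(1) − h(s) for all s ∈ [0,1], and h(1) = γ(a). Then there exists a symmetric Ω-homotopy H on [0,1] × J whose initial path is h, whose endpoint path is γ, whose image H([0,1]×J) is contained in ℂ∖Ω_{δ′}, and whose final path H_b is C¹. -/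
open Set Metric Filter Topology intervalIntegral

noncomputable section

/-- A path `γ : [a,b] → ℂ` which is piecewise `C¹`. -/
def PiecewiseC1On (γ : ℝ → ℂ) (a b : ℝ) : Prop :=
  ContinuousOn γ (Set.Icc a b) ∧
  ∃ (n : ℕ) (u : ℕ → ℝ), u 0 = a ∧ u n = b ∧ (∀ i < n, u i ≤ u (i + 1)) ∧
    ∀ i < n, ContDiffOn ℝ 1 γ (Set.Icc (u i) (u (i + 1)))

/-- The germ at `γ a` of the function `f` admits analytic continuation along
`γ` restricted to `[a,b]`, resulting in the germ of `g` at `γ b`.  This is the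
usual definition via a family of analytic elements `(F t, r t)` along the path
which are locally compatible. -/
def ContAlong (f : ℂ → ℂ) (γ : ℝ → ℂ) (a b : ℝ) (g : ℂ → ℂ) : Prop :=
  ∃ (F : ℝ → ℂ → ℂ) (r : ℝ → ℝ),
    (∀ t ∈ Set.Icc a b, 0 < r t ∧ AnalyticOnNhd ℂ (F t) (Metric.ball (γ t) (r t))) ∧
    (∀ t ∈ Set.Icc a b, ∃ ε > 0, ∀ t' ∈ Set.Icc a b, |t' - t| < ε →
      Set.EqOn (F t) (F t') (Metric.ball (γ t) (r t) ∩ Metric.ball (γ t') (r t'))) ∧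
    (∀ᶠ z in 𝓝 (γ a), F a z = f z) ∧
    (∀ᶠ z in 𝓝 (γ b), F b z = g z)

/-- The germ of `f` at `γ a` admits analytic continuation along `γ|[a,b]`. -/
def ContinuableAlong (f : ℂ → ℂ) (γ : ℝ → ℂ) (a b : ℝ) : Prop :=
  ∃ g, ContAlong f γ a b g

/-- `f` is an `Ω`-continuable holomorphic germ at `0`: it is holomorphic on some
disc `D_R` with `D_R∖{0}` disjoint from `Ω`, and admits analytic continuation
along every (piecewise `C¹`) path of `ℂ∖Ω` originating from any point of `D_R∖{0}`. -/
def OmegaCont (Ω : Set ℂ) (f : ℂ → ℂ) : Prop :=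
  ∃ R > 0, AnalyticOnNhd ℂ f (Metric.ball 0 R) ∧
    (∀ ζ ∈ Metric.ball (0:ℂ) R, ζ ≠ 0 → ζ ∉ Ω) ∧
    ∀ γ : ℝ → ℂ, PiecewiseC1On γ 0 1 → γ 0 ∈ Metric.ball (0:ℂ) R → γ 0 ≠ 0 →
      (∀ t ∈ Set.Icc (0:ℝ) 1, γ t ∉ Ω) → ContinuableAlong f γ 0 1

/-- Convolution of two germs: `(f ⋆ g)(ζ) = ∫₀^ζ f(ξ) g(ζ-ξ) dξ`, the integral
being taken over the line segment from `0` to `ζ`. -/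
def conv (f g : ℂ → ℂ) (ζ : ℂ) : ℂ :=
  ζ * ∫ t in (0:ℝ)..1, f ((t : ℂ) * ζ) * g ((1 - (t : ℂ)) * ζ)

/-- A symmetric `Ω`-homotopy on `[0,1] × [a,b]`: a continuous map such that each
path `H_t = H ( · , t)` is piecewise `C¹`, starts at `0`, avoids `Ω` on `(0,1]`,
and is symmetric with respect to its midpoint: `H_t(1) - H_t(s) = H_t(1-s)`. -/
def SymmOmegaHomotopy (Ω : Set ℂ) (H : ℝ → ℝ → ℂ) (a b : ℝ) : Prop :=
  ContinuousOn (fun p : ℝ × ℝ => H p.1 p.2) (Set.Icc 0 1 ×ˢ Set.Icc a b) ∧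
  ∀ t ∈ Set.Icc a b,
    PiecewiseC1On (fun s => H s t) 0 1 ∧
    H 0 t = 0 ∧
    (∀ s ∈ Set.Ioc (0:ℝ) 1, H s t ∉ Ω) ∧
    (∀ s ∈ Set.Icc (0:ℝ) 1, H 1 t - H s t = H (1 - s) t)

/-- One Euler step multiplier. -/
theorem aux_eta (Ω : Set ℂ) (δ' m : ℝ) (hm : 0 < m) :
    ∃ η : ℂ → ℝ, ContDiff ℝ 1 η ∧ (∀ z, 0 ≤ η z) ∧
      (∀ z, η z ≠ 0 → m / 8 < ‖z‖ ∧ δ' + m / 8 < Metric.infDist z Ω) ∧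
      (∀ z, m / 2 ≤ ‖z‖ → δ' + m / 2 ≤ Metric.infDist z Ω → 0 < η z) := by
  have hS : IsClosed {z : ℂ | ‖z‖ ≤ m / 8 ∨ Metric.infDist z Ω ≤ δ' + m / 8} :=
    (isClosed_le continuous_norm continuous_const).union
      (isClosed_le (Metric.continuous_infDist_pt Ω) continuous_const)
  have hT : IsClosed {z : ℂ | m / 2 ≤ ‖z‖ ∧ δ' + m / 2 ≤ Metric.infDist z Ω} :=
    (isClosed_le continuous_const continuous_norm).inter
      (isClosed_le continuous_const (Metric.continuous_infDist_pt Ω))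
  have hST : Disjoint {z : ℂ | ‖z‖ ≤ m / 8 ∨ Metric.infDist z Ω ≤ δ' + m / 8}
      {z : ℂ | m / 2 ≤ ‖z‖ ∧ δ' + m / 2 ≤ Metric.infDist z Ω} := by
    rw [Set.disjoint_left]
    rintro z (h1 | h1) ⟨h2, h3⟩ <;> linarith
  obtain ⟨f, hf0, hf1, hf⟩ := exists_contMDiffMap_zero_one_of_isClosed (n := 1)
    (modelWithCornersSelf ℝ ℂ) hS hT hST
  refine ⟨f, f.contMDiff.contDiff, fun z => (hf z).1, ?_, ?_⟩
  · intro z hz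
    by_contra hcon
    apply hz
    apply hf0
    rw [not_and_or, not_lt, not_lt] at hcon
    exact hcon
  · intro z h1 h2
    have : f z = 1 := hf1 ⟨h1, h2⟩
    rw [this]; exact one_pos

theorem aux_add (Ω : Set ℂ) (hne : Ω.Nonempty)
    (hadd : ∀ ω₁ ∈ Ω, ∀ ω₂ ∈ Ω, ω₁ + ω₂ ∈ Ω) (x y : ℂ) :
    Metric.infDist (x + y) Ω ≤ Metric.infDist x Ω + Metric.infDist y Ω := by
  refine le_of_forall_pos_le_add fun ε hε => ?_
  obtain ⟨u, hu, hu'⟩ := (Metric.infDist_lt_iff hne).1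
    (show Metric.infDist x Ω < Metric.infDist x Ω + ε / 2 by linarith)
  obtain ⟨v, hv, hv'⟩ := (Metric.infDist_lt_iff hne).1
    (show Metric.infDist y Ω < Metric.infDist y Ω + ε / 2 by linarith)
  have h1 := Metric.infDist_le_dist_of_mem (x := x + y) (hadd u hu v hv)
  have h2 := dist_add_add_le x y u v
  linarith

theorem aux_pos (Ω : Set ℂ) (hne : Ω.Nonempty)
    (hadd : ∀ ω₁ ∈ Ω, ∀ ω₂ ∈ Ω, ω₁ + ω₂ ∈ Ω) (δ δ' m : ℝ) (hm : m + 2 * δ' ≤ δ)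
    (hδ' : 0 < δ') (x y : ℂ) (hxy : m ≤ ‖x + y‖) (hd : δ ≤ Metric.infDist (x + y) Ω) :
    (m / 2 ≤ ‖x‖ ∧ δ' + m / 2 ≤ Metric.infDist x Ω) ∨
    (m / 2 ≤ ‖y‖ ∧ δ' + m / 2 ≤ Metric.infDist y Ω) := by
  have h1 := norm_add_le x y
  have h2 := aux_add Ω hne hadd x y
  have h3 : Metric.infDist (x + y) Ω ≤ Metric.infDist x Ω + ‖y‖ := by
    have := Metric.infDist_le_infDist_add_dist (s := Ω) (x := x + y) (y := x)
    simpa [dist_eq_norm] using this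
  have h4 : Metric.infDist (x + y) Ω ≤ Metric.infDist y Ω + ‖x‖ := by
    have := Metric.infDist_le_infDist_add_dist (s := Ω) (x := x + y) (y := y)
    simpa [dist_eq_norm] using this
  by_contra hcon
  rw [not_or, not_and_or, not_and_or, not_le, not_le, not_le, not_le] at hcon
  obtain ⟨h5 | h5, h6 | h6⟩ := hcon <;> linarith

/-- The inductive property: a good homotopy on `[a,c]`. -/
def GoodH (Ω : Set ℂ) (δ' : ℝ) (γ h : ℝ → ℂ) (a c : ℝ) (H : ℝ → ℝ → ℂ) : Prop :=
  ContinuousOn (fun p : ℝ × ℝ => H p.1 p.2) (Set.Icc 0 1 ×ˢ Set.Icc a c) ∧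
  (∀ s ∈ Set.Icc (0:ℝ) 1, H s a = h s) ∧
  ∀ t ∈ Set.Icc a c,
    ContDiffOn ℝ 1 (fun s => H s t) (Set.Icc 0 1) ∧
    H 0 t = 0 ∧ H 1 t = γ t ∧
    (∀ s ∈ Set.Icc (0:ℝ) 1, δ' ≤ Metric.infDist (H s t) Ω) ∧
    (∀ s ∈ Set.Icc (0:ℝ) 1, H 1 t - H s t = H (1 - s) t)

theorem aux_step (Ω : Set ℂ) (δ' m : ℝ) (hm : 0 < m)
    (η : ℂ → ℝ) (hη : ContDiff ℝ 1 η) (hη0 : ∀ z, 0 ≤ η z)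
    (hηS : ∀ z, η z ≠ 0 → m / 8 < ‖z‖ ∧ δ' + m / 8 < Metric.infDist z Ω)
    (γ h : ℝ → ℂ) (a c d : ℝ) (hac : a ≤ c) (hcd : c ≤ d)
    (hγ : ContinuousOn γ (Set.Icc a d))
    (hpos : ∀ z, 0 < η z + η (γ c - z))
    (hsmall : ∀ t ∈ Set.Icc c d, ‖γ t - γ c‖ ≤ m / 8)
    (H : ℝ → ℝ → ℂ) (hH : GoodH Ω δ' γ h a c H) :
    ∃ H', GoodH Ω δ' γ h a d H' := by
  obtain ⟨hHc, hHa, hH⟩ := hH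
  set χ : ℂ → ℝ := fun z => η z / (η z + η (γ c - z)) with hχ
  have hχC : ContDiff ℝ 1 χ :=
    hη.div (hη.add (hη.comp (contDiff_const.sub contDiff_id))) (fun z => (hpos z).ne')
  have hcm : c ∈ Set.Icc a c := ⟨hac, le_rfl⟩
  have hη00 : η 0 = 0 := by
    by_contra hcon
    have := (hηS 0 hcon).1
    rw [norm_zero] at this
    linarith
  have hχ0 : χ 0 = 0 := by simp [hχ, hη00]
  have hχ1 : χ (γ c) = 1 := by
    have := hpos (γ c)
    simp only [hχ]
    rw [sub_self, hη00, add_zero] at this ⊢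
    exact div_self this.ne'
  have hχsym : ∀ z, χ (γ c - z) = 1 - χ z := by
    intro z
    have := (hpos z).ne'
    simp only [hχ, sub_sub_cancel]
    rw [add_comm (η (γ c - z)) (η z)]
    field_simp
    ring
  have hχle : ∀ z, |χ z| ≤ 1 := by
    intro z
    have h1 : 0 ≤ χ z := div_nonneg (hη0 z) (hpos z).le
    rw [abs_of_nonneg h1]
    exact (div_le_one (hpos z)).2 (by linarith [hη0 (γ c - z)])
  obtain ⟨hcC, hc0, hc1, hcd', hcsym⟩ := hH c hcm
  refine ⟨fun s t => H s (min t c) + (γ (max t c) - γ c) * (χ (H s c) : ℂ), ?_, ?_, ?_⟩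
  · have e1 : ContinuousOn (fun p : ℝ × ℝ => H p.1 (min p.2 c)) (Set.Icc 0 1 ×ˢ Set.Icc a d) := by
      refine hHc.comp (f := fun p : ℝ × ℝ => (p.1, min p.2 c)) (by fun_prop) ?_
      rintro ⟨s, t⟩ ⟨hs, ht⟩
      exact ⟨hs, le_min ht.1 hac, min_le_right _ _⟩
    have e2 : ContinuousOn (fun p : ℝ × ℝ => γ (max p.2 c)) (Set.Icc 0 1 ×ˢ Set.Icc a d) := by
      refine hγ.comp (f := fun p : ℝ × ℝ => max p.2 c) (by fun_prop) ?_
      rintro ⟨s, t⟩ ⟨hs, ht⟩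
      exact ⟨le_max_of_le_left ht.1, max_le ht.2 hcd⟩
    have e3 : ContinuousOn (fun p : ℝ × ℝ => H p.1 c) (Set.Icc 0 1 ×ˢ Set.Icc a d) := by
      refine hHc.comp (f := fun p : ℝ × ℝ => (p.1, c)) (by fun_prop) ?_
      rintro ⟨s, t⟩ ⟨hs, ht⟩
      exact ⟨hs, hcm⟩
    exact e1.add ((e2.sub continuousOn_const).mul
      (Complex.continuous_ofReal.comp_continuousOn (hχC.continuous.comp_continuousOn e3)))
  · intro s hs
    simp only [min_eq_left hac, max_eq_right hac, sub_self, zero_mul, add_zero]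
    exact hHa s hs
  · intro t ht
    rcases le_total t c with htc | htc
    · simp only [min_eq_left htc, max_eq_right htc, sub_self, zero_mul, add_zero]
      exact hH t ⟨ht.1, htc⟩
    · simp only [min_eq_right htc, max_eq_left htc]
      refine ⟨?_, ?_, ?_, ?_, ?_⟩
      · exact hcC.add (contDiffOn_const.mul
          (Complex.ofRealCLM.contDiff.comp_contDiffOn (hχC.comp_contDiffOn hcC)))
      · rw [hc0, hχ0]; simp
      · rw [hc1, hχ1]; simp
      · intro s hs
        by_cases hz : η (H s c) = 0
        · have : χ (H s c) = 0 := by simp [hχ, hz]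
          rw [this]
          simpa using hcd' s hs
        · have h1 := (hηS _ hz).2
          have h2 := Metric.infDist_le_infDist_add_dist (s := Ω) (x := H s c)
            (y := H s c + (γ t - γ c) * (χ (H s c) : ℂ))
          have h3 : dist (H s c) (H s c + (γ t - γ c) * (χ (H s c) : ℂ)) ≤ m / 8 := by
            rw [dist_self_add_right, norm_mul, Complex.norm_real, Real.norm_eq_abs]
            have h4 := hsmall t ⟨htc, ht.2⟩
            have h5 := hχle (H s c)
            nlinarith [norm_nonneg (γ t - γ c), abs_nonneg (χ (H s c))]
          linarith
      · intro s hs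
        rw [← hcsym s hs, hc1, hχ1, hχsym]
        push_cast
        ring

/-- **Lemma (sublemkey).** Suppose `Ω` is stable under addition and `0 ∉ Ω`.
Given `0 < δ' < δ/2`, a path `γ : [a,b] → ℂ` avoiding `0` and at distance `≥ δ`
from `Ω`, and a `C¹` symmetric initial path `h` at distance `≥ δ'` from `Ω` with
`h 1 = γ a`, there is a symmetric `Ω`-homotopy on `[0,1]×[a,b]` with initial path
`h`, endpoint path `γ`, image at distance `≥ δ'` from `Ω`, and `C¹` final path. -/
theorem stmt10 (Ω : Set ℂ) (hne : Ω.Nonempty) (hcl : IsClosed Ω)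
    (hdisc : DiscreteTopology Ω)
    (hadd : ∀ ω₁ ∈ Ω, ∀ ω₂ ∈ Ω, ω₁ + ω₂ ∈ Ω) (h0 : (0:ℂ) ∉ Ω)
    (δ δ' : ℝ) (hδ : 0 < δ) (hδ' : 0 < δ') (hδδ' : δ' < δ / 2)
    (a b : ℝ) (hab : a ≤ b)
    (γ : ℝ → ℂ) (hγ : PiecewiseC1On γ a b)
    (hγ0 : ∀ t ∈ Set.Icc a b, γ t ≠ 0)
    (hγΩ : ∀ t ∈ Set.Icc a b, δ ≤ Metric.infDist (γ t) Ω)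
    (h : ℝ → ℂ) (hhC1 : ContDiffOn ℝ 1 h (Set.Icc 0 1))
    (hh0 : h 0 = 0)
    (hhΩ : ∀ s ∈ Set.Icc (0:ℝ) 1, δ' ≤ Metric.infDist (h s) Ω)
    (hhsym : ∀ s ∈ Set.Icc (0:ℝ) 1, h (1 - s) = h 1 - h s)
    (hh1 : h 1 = γ a) :
    ∃ H : ℝ → ℝ → ℂ, SymmOmegaHomotopy Ω H a b ∧
      (∀ s ∈ Set.Icc (0:ℝ) 1, H s a = h s) ∧
      (∀ t ∈ Set.Icc a b, H 1 t = γ t) ∧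
      (∀ s ∈ Set.Icc (0:ℝ) 1, ∀ t ∈ Set.Icc a b, δ' ≤ Metric.infDist (H s t) Ω) ∧
      ContDiffOn ℝ 1 (fun s => H s b) (Set.Icc 0 1) := by
  obtain ⟨hγc, -⟩ := hγ
  have hane : (Set.Icc a b).Nonempty := ⟨a, le_rfl, hab⟩
  obtain ⟨t0, ht0, hmin⟩ := isCompact_Icc.exists_isMinOn hane hγc.norm
  have hm0 : 0 < ‖γ t0‖ := norm_pos_iff.2 (hγ0 t0 ht0)
  obtain ⟨m, hm, hm1, hm2⟩ : ∃ m > 0, m ≤ ‖γ t0‖ ∧ m + 2 * δ' ≤ δ :=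
    ⟨min ‖γ t0‖ (δ - 2 * δ'), lt_min hm0 (by linarith), min_le_left _ _,
      by linarith [min_le_right ‖γ t0‖ (δ - 2 * δ')]⟩
  obtain ⟨η, hη, hη0, hηS, hηT⟩ := aux_eta Ω δ' m hm
  have hpos : ∀ t ∈ Set.Icc a b, ∀ z, 0 < η z + η (γ t - z) := by
    intro t ht z
    have hmt : m ≤ ‖z + (γ t - z)‖ := by
      rw [add_sub_cancel]; exact hm1.trans (hmin ht)
    have hdt : δ ≤ Metric.infDist (z + (γ t - z)) Ω := by
      rw [add_sub_cancel]; exact hγΩ t ht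
    rcases aux_pos Ω hne hadd δ δ' m hm2 hδ' z (γ t - z) hmt hdt with h1 | h1
    · linarith [hηT _ h1.1 h1.2, hη0 (γ t - z)]
    · linarith [hηT _ h1.1 h1.2, hη0 z]
  have huc := isCompact_Icc.uniformContinuousOn_of_continuous hγc
  rw [Metric.uniformContinuousOn_iff_le] at huc
  obtain ⟨ε, hε, huc⟩ := huc (m / 8) (by linarith)
  have key : ∀ n : ℕ, ∀ d ∈ Set.Icc a b, d ≤ a + n * ε → ∃ H, GoodH Ω δ' γ h a d H := by
    intro n
    induction n with
    | zero =>
      intro d hd hdn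
      have hda : d = a := le_antisymm (by simpa using hdn) hd.1
      subst hda
      refine ⟨fun s _ => h s, ?_, fun _ _ => rfl, ?_⟩
      · exact hhC1.continuousOn.comp (f := fun p : ℝ × ℝ => p.1) (by fun_prop) (fun p hp => hp.1)
      · intro t ht
        have hta : t = d := le_antisymm ht.2 ht.1
        subst hta
        exact ⟨hhC1, hh0, hh1, hhΩ, fun s hs => (hhsym s hs).symm⟩
    | succ n ih =>
      intro d hd hdn
      by_cases hdn' : d ≤ a + n * ε
      · exact ih d hd hdn'
      · push Not at hdn'
        push_cast at hdn
        have hc : max a (d - ε) ∈ Set.Icc a b :=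
          ⟨le_max_left _ _, max_le hab (by linarith [hd.2])⟩
        have hcd : max a (d - ε) ≤ d := max_le hd.1 (by linarith)
        have hcn : max a (d - ε) ≤ a + n * ε :=
          max_le (by nlinarith [n.cast_nonneg (α := ℝ)]) (by linarith)
        obtain ⟨H, hH⟩ := ih _ hc hcn
        refine aux_step Ω δ' m hm η hη hη0 hηS γ h a _ d hc.1 hcd
          (hγc.mono (Set.Icc_subset_Icc_right hd.2)) (hpos _ hc) ?_ H hH
        intro t ht
        rw [← dist_eq_norm]
        refine huc t ⟨hc.1.trans ht.1, ht.2.trans hd.2⟩ _ hc ?_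
        rw [Real.dist_eq, abs_of_nonneg (by linarith [ht.1])]
        linarith [ht.2, le_max_right a (d - ε)]
  obtain ⟨n, hn⟩ := exists_nat_ge ((b - a) / ε)
  rw [div_le_iff₀ hε] at hn
  obtain ⟨H, hHc, hHa, hH⟩ := key n b ⟨hab, le_rfl⟩ (by linarith)
  refine ⟨H, ⟨hHc, ?_⟩, hHa, fun t ht => (hH t ht).2.2.1,
    fun s hs t ht => (hH t ht).2.2.2.1 s hs, (hH b ⟨hab, le_rfl⟩).1⟩
  intro t ht
  obtain ⟨h1, h2, h3, h4, h5⟩ := hH t ht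
  refine ⟨⟨h1.continuousOn, 1, fun i => (i : ℝ), by simp, by simp, ?_, ?_⟩, h2, ?_, h5⟩
  · intro i _; simp
  · intro i hi
    obtain rfl : i = 0 := by omega
    simpa using h1
  · intro s hs hmem
    have h6 := h4 s ⟨hs.1.le, hs.2⟩
    rw [Metric.infDist_zero_of_mem hmem] at h6
    linarith
end
end

section
/- Let ω₁, ω₂ ∈ ℂ∖{0} and set ω := ω₁ + ω₂. If the line segment [0,ω] contains neither ω₁ nor ω₂ (equivalently, ω belongs to the cut plane Δ = ℂ ∖ (ω₁·[1,∞) ∪ ω₂·[1,∞))), then ∫₀^ω dξ/(ξ−ω₁) + ∫₀^ω dξ/(ξ−ω₂) = 0, where the integrals are taken over the segment [0,ω]. Consequently the meromorphic continuation to Δ of the convolution (1/(ζ−ω₁)) * (1/(ζ−ω₂)) = (L₁(ζ)+L₂(ζ))/(ζ−ω) has a removable singularity at ζ = ω. -/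
open Set Metric Filter Topology intervalIntegral

noncomputable section

theorem L_eq_log (a ζ : ℂ) (ha : a ≠ 0) (hs : 1 - ζ / a ∈ Complex.slitPlane) :
    (∫ t in (0:ℝ)..1, ((t : ℂ) * ζ - a)⁻¹ * ζ) = Complex.log (1 - ζ / a) := by
  have h := Complex.log_inv_eq_integral hs
  rw [Complex.log_inv _ (Complex.slitPlane_arg_ne_pi hs), ← intervalIntegral.integral_const_mul] at h
  rw [← neg_neg (Complex.log _), h, ← intervalIntegral.integral_neg]
  congr 1
  ext t
  have e : (t : ℂ) * ζ - a = -(a * (1 - t • (ζ / a))) := by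
    rw [Complex.real_smul]; field_simp; ring
  rw [e, inv_neg, mul_inv]
  field_simp

theorem slit_of_seg (a ω : ℂ) (ha : a ≠ 0)
    (h : ∀ t ∈ Set.Icc (0:ℝ) 1, (t : ℂ) * ω ≠ a) : 1 - ω / a ∈ Complex.slitPlane := by
  by_contra hn
  rw [Complex.mem_slitPlane_iff] at hn
  push Not at hn
  obtain ⟨hre, him⟩ := hn
  simp only [Complex.sub_re, Complex.one_re, Complex.sub_im, Complex.one_im] at hre him
  set s : ℝ := (ω / a).re with hs
  have h1 : 1 ≤ s := by linarith
  have hw : ω / a = (s : ℂ) := by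
    apply Complex.ext
    · simp [hs]
    · simp; linarith
  have hω : ω = s * a := by rw [← hw]; field_simp
  have hs0 : (s : ℂ) ≠ 0 := by
    have : s ≠ 0 := by linarith
    exact_mod_cast this
  refine h s⁻¹ ⟨by positivity, inv_le_one_of_one_le₀ h1⟩ ?_
  rw [hω]; push_cast; field_simp

theorem L_ev (a ω : ℂ) (ha : a ≠ 0)
    (h : ∀ t ∈ Set.Icc (0:ℝ) 1, (t : ℂ) * ω ≠ a) :
    AnalyticAt ℂ (fun ζ => ∫ t in (0:ℝ)..1, ((t : ℂ) * ζ - a)⁻¹ * ζ) ω := by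
  have hs := slit_of_seg a ω ha h
  have hc : ContinuousAt (fun ζ : ℂ => 1 - ζ / a) ω := by fun_prop
  have hev : ∀ᶠ ζ in 𝓝 ω, Complex.log (1 - ζ / a)
      = ∫ t in (0:ℝ)..1, ((t : ℂ) * ζ - a)⁻¹ * ζ := by
    filter_upwards [hc.eventually (Complex.isOpen_slitPlane.mem_nhds hs)] with ζ hζ
    exact (L_eq_log a ζ ha hζ).symm
  refine AnalyticAt.congr ?_ hev
  exact AnalyticAt.clog (by fun_prop (disch := assumption)) hs

/-- If the segment `[0, ω₁+ω₂]` contains neither `ω₁` nor `ω₂`, then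
`∫₀^ω dξ/(ξ-ω₁) + ∫₀^ω dξ/(ξ-ω₂) = 0` (integrals over the segment, `ω = ω₁+ω₂`);
consequently the meromorphic function `(L₁(ζ)+L₂(ζ))/(ζ-ω)` — the meromorphic
continuation of the convolution `1/(ζ-ω₁) ⋆ 1/(ζ-ω₂)` to the cut plane — has a
removable singularity at `ζ = ω`. -/
theorem stmt15 (ω₁ ω₂ : ℂ) (h₁ : ω₁ ≠ 0) (h₂ : ω₂ ≠ 0)
    (hseg : ∀ t ∈ Set.Icc (0:ℝ) 1,
      (t : ℂ) * (ω₁ + ω₂) ≠ ω₁ ∧ (t : ℂ) * (ω₁ + ω₂) ≠ ω₂) :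
    ((∫ t in (0:ℝ)..1, ((t : ℂ) * (ω₁ + ω₂) - ω₁)⁻¹ * (ω₁ + ω₂))
      + ∫ t in (0:ℝ)..1, ((t : ℂ) * (ω₁ + ω₂) - ω₂)⁻¹ * (ω₁ + ω₂)) = 0 ∧
    ∃ g : ℂ → ℂ, AnalyticAt ℂ g (ω₁ + ω₂) ∧
      ∀ᶠ ζ in 𝓝[{(ω₁ + ω₂)}ᶜ] (ω₁ + ω₂),
        ((∫ t in (0:ℝ)..1, ((t : ℂ) * ζ - ω₁)⁻¹ * ζ)
          + ∫ t in (0:ℝ)..1, ((t : ℂ) * ζ - ω₂)⁻¹ * ζ) / (ζ - ω₁ - ω₂) = g ζ := by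
  have hzero : ((∫ t in (0:ℝ)..1, ((t : ℂ) * (ω₁ + ω₂) - ω₁)⁻¹ * (ω₁ + ω₂))
      + ∫ t in (0:ℝ)..1, ((t : ℂ) * (ω₁ + ω₂) - ω₂)⁻¹ * (ω₁ + ω₂)) = 0 := by
    have h := intervalIntegral.integral_comp_sub_left (a := 0) (b := 1)
      (fun t : ℝ => ((t : ℂ) * (ω₁ + ω₂) - ω₁)⁻¹ * (ω₁ + ω₂)) 1
    simp only [sub_self, sub_zero] at h
    rw [← h, add_eq_zero_iff_eq_neg, ← intervalIntegral.integral_neg]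
    congr 1
    ext t
    have e : ((1 - t : ℝ) : ℂ) * (ω₁ + ω₂) - ω₁ = -((t : ℂ) * (ω₁ + ω₂) - ω₂) := by
      push_cast; ring
    rw [e, inv_neg, neg_mul]
  refine ⟨hzero, ?_⟩
  have ha := (L_ev ω₁ (ω₁ + ω₂) h₁ fun t ht => (hseg t ht).1).add
    (L_ev ω₂ (ω₁ + ω₂) h₂ fun t ht => (hseg t ht).2)
  obtain ⟨p, hp⟩ := ha
  refine ⟨_, ⟨_, hp.has_fpower_series_dslope_fslope⟩, ?_⟩
  filter_upwards [self_mem_nhdsWithin] with ζ hζ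
  rw [dslope_of_ne _ hζ, slope_def_field]
  simp only [Pi.add_apply]
  rw [hzero, sub_zero, sub_sub]
end
end

section
/- Let θ ∈ ℝ and r₁, r₂ > 0, set ω₁ = r₁e^{iθ}, ω₂ = r₂e^{iθ} and ω = ω₁ + ω₂. Let γ₀ be the path from 0 to ω which follows the segment [0,ω] except that it circumvents ω₁ and ω₂ by half-circles of sufficiently small radius travelled anti-clockwise. Then ∫_{γ₀} dξ/(ξ−ω₁) = log(r₂/r₁) + iπ, ∫_{γ₀} dξ/(ξ−ω₂) = log(r₁/r₂) + iπ, and hence ∫_{γ₀} (1/(ξ−ω₁) + 1/(ξ−ω₂)) dξ = 2πi. -/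
open Set Metric Filter Topology intervalIntegral

noncomputable section

/-- The path from `0` to `(r₁+r₂)e^{iθ}`, parametrised by `x ∈ [0, r₁+r₂]`, which
follows the segment `[0, (r₁+r₂)e^{iθ}]` except that it circumvents the points
`ω₁ = r₁e^{iθ}` and `ω₂ = r₂e^{iθ}` by half-circles of radius `ε` travelled
anti-clockwise. -/
def circumventPath (r₁ r₂ ε θ : ℝ) (x : ℝ) : ℂ :=
  if |x - r₁| < ε then
    (r₁ : ℂ) * Complex.exp (θ * Complex.I)
      + (ε : ℂ) * Complex.exp (θ * Complex.I)
          * Complex.exp (Real.pi * Complex.I * (1 + ((x - r₁ + ε) / (2 * ε) : ℝ)))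
  else if |x - r₂| < ε then
    (r₂ : ℂ) * Complex.exp (θ * Complex.I)
      + (ε : ℂ) * Complex.exp (θ * Complex.I)
          * Complex.exp (Real.pi * Complex.I * (1 + ((x - r₂ + ε) / (2 * ε) : ℝ)))
  else (x : ℂ) * Complex.exp (θ * Complex.I)

/-- clamp to `[-ε, ε]` -/
def cvClamp (ε y : ℝ) : ℝ := max (-ε) (min ε y)

/-- difference between the circumventing path and the straight line -/
def cvGap (ε y : ℝ) : ℂ :=
  (ε : ℂ) * Complex.exp (Real.pi * Complex.I * (1 + ((cvClamp ε y + ε) / (2 * ε) : ℝ)))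
    - (cvClamp ε y : ℂ)

lemma cvGap_continuous (ε : ℝ) : Continuous (cvGap ε) := by
  unfold cvGap cvClamp
  fun_prop

lemma cvClamp_of_lt {ε y : ℝ} (h : |y| < ε) : cvClamp ε y = y := by
  rw [abs_lt] at h
  unfold cvClamp
  rw [min_eq_right h.2.le, max_eq_right h.1.le]

lemma cvGap_of_ge {ε y : ℝ} (hε : 0 < ε) (h : ε ≤ |y|) : cvGap ε y = 0 := by
  have hε' : ε ≠ 0 := hε.ne'
  rcases le_abs.1 h with h | h
  · have : cvClamp ε y = ε := by
      unfold cvClamp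
      rw [min_eq_left h, max_eq_right (by linarith)]
    have h2 : (ε + ε) / (2 * ε) = 1 := by field_simp; norm_num
    unfold cvGap
    rw [this, h2]
    have h3 : (Real.pi : ℂ) * Complex.I * (1 + ((1 : ℝ) : ℂ)) = 2 * Real.pi * Complex.I := by
      push_cast; ring
    rw [h3, Complex.exp_two_pi_mul_I]
    ring
  · have : cvClamp ε y = -ε := by
      unfold cvClamp
      rw [min_eq_right (by linarith), max_eq_left (by linarith)]
    unfold cvGap
    rw [this]
    simp

lemma cvGap_im_neg {ε y : ℝ} (hε : 0 < ε) (h : |y| < ε) : (cvGap ε y).im < 0 := by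
  unfold cvGap
  rw [cvClamp_of_lt h]
  rw [abs_lt] at h
  set t : ℝ := (y + ε) / (2 * ε) with ht
  have ht0 : 0 < t := by rw [ht]; apply div_pos <;> linarith
  have ht1 : t < 1 := by rw [ht, div_lt_one (by linarith)]; linarith
  have h3 : (Real.pi : ℂ) * Complex.I * (1 + (t : ℂ))
      = ((Real.pi * t + Real.pi : ℝ) : ℂ) * Complex.I := by
    push_cast; ring
  rw [h3]
  rw [Complex.sub_im, Complex.im_ofReal_mul, Complex.ofReal_im, Complex.exp_ofReal_mul_I_im,
    Real.sin_add_pi]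
  have hs : 0 < Real.sin (Real.pi * t) :=
    Real.sin_pos_of_pos_of_lt_pi (by positivity) (by nlinarith [Real.pi_pos])
  nlinarith

lemma cvGap_deriv {ε y : ℝ} (hε : 0 < ε) (h : |y| ≠ ε) :
    ∃ g' : ℂ, HasDerivAt (cvGap ε) g' y ∧ ‖g'‖ ≤ 3 := by
  rcases lt_or_gt_of_ne h with h | h
  · have hev : ∀ᶠ z in 𝓝 y, |z| < ε :=
      (continuous_abs.tendsto y).eventually (gt_mem_nhds h)
    set E : ℝ → ℂ := fun z => Real.pi * Complex.I * (1 + ((z + ε) / (2 * ε) : ℝ)) with hE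
    have hEd : HasDerivAt E (Real.pi * Complex.I * ((1 / (2 * ε) : ℝ) : ℂ)) y := by
      have h1 : HasDerivAt (fun z : ℝ => (z + ε) / (2 * ε)) (1 / (2 * ε)) y :=
        ((hasDerivAt_id y).add_const ε).div_const _
      exact ((h1.ofReal_comp).const_add 1).const_mul _
    have hd : HasDerivAt (fun z : ℝ => (ε : ℂ) * Complex.exp (E z) - (z : ℂ))
        ((ε : ℂ) * (Complex.exp (E y) * (Real.pi * Complex.I * ((1 / (2 * ε) : ℝ) : ℂ))) - ((1 : ℝ) : ℂ)) y :=
      (hEd.cexp.const_mul _).sub (hasDerivAt_id y).ofReal_comp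
    refine ⟨_, hd.congr_of_eventuallyEq ?_, ?_⟩
    · filter_upwards [hev] with z hz
      unfold cvGap
      rw [cvClamp_of_lt hz]
    · have hn : ‖Complex.exp (E y)‖ = 1 := by
        have : E y = ((Real.pi * (1 + (y + ε) / (2 * ε)) : ℝ) : ℂ) * Complex.I := by
          simp only [hE]; push_cast; ring
        rw [this, Complex.norm_exp_ofReal_mul_I]
      refine (norm_sub_le _ _).trans ?_
      rw [norm_mul, norm_mul, hn, norm_mul, norm_mul, Complex.norm_I, Complex.norm_real,
        Complex.norm_real, Complex.norm_real, Complex.norm_real, Real.norm_of_nonneg hε.le,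
        Real.norm_of_nonneg Real.pi_pos.le, Real.norm_of_nonneg (by positivity : 0 ≤ 1 / (2 * ε)),
        Real.norm_of_nonneg (by norm_num : (0 : ℝ) ≤ 1)]
      have : ε * (1 * (Real.pi * 1 * (1 / (2 * ε)))) = Real.pi / 2 := by
        field_simp
      rw [this]
      linarith [Real.pi_le_four]
  · refine ⟨0, ?_, by simp⟩
    have hev : ∀ᶠ z in 𝓝 y, ε < |z| :=
      (continuous_abs.tendsto y).eventually (lt_mem_nhds h)
    refine (hasDerivAt_const y (0 : ℂ)).congr_of_eventuallyEq ?_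
    filter_upwards [hev] with z hz
    exact cvGap_of_ge hε hz.le

lemma circumventPath_eq (θ r₁ r₂ ε : ℝ) (hε : 0 < ε)
    (hsep : r₁ ≠ r₂ → 2 * ε < |r₁ - r₂|) :
    ∃ k : ℝ, 0 ≤ k ∧ k ≤ 1 ∧ (r₁ ≠ r₂ → k = 1) ∧
      circumventPath r₁ r₂ ε θ = fun x : ℝ => Complex.exp (θ * Complex.I) *
        ((x : ℂ) + cvGap ε (x - r₁) + (k : ℂ) * cvGap ε (x - r₂)) := by
  by_cases h : r₁ = r₂
  · subst h
    refine ⟨0, le_rfl, zero_le_one, fun h => absurd rfl h, ?_⟩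
    funext x
    unfold circumventPath
    by_cases h1 : |x - r₁| < ε
    · rw [if_pos h1]
      unfold cvGap
      rw [cvClamp_of_lt h1]
      push_cast
      ring
    · rw [if_neg h1, if_neg h1, cvGap_of_ge hε (not_lt.1 h1)]
      push_cast
      ring
  · refine ⟨1, zero_le_one, le_rfl, fun _ => rfl, ?_⟩
    have hs := hsep h
    funext x
    unfold circumventPath
    by_cases h1 : |x - r₁| < ε
    · have h2 : ε ≤ |x - r₂| := by
        have := abs_sub_le r₁ x r₂
        rw [abs_sub_comm r₁ x] at this
        linarith
      rw [if_pos h1, cvGap_of_ge hε h2]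
      unfold cvGap
      rw [cvClamp_of_lt h1]
      push_cast
      ring
    · rw [if_neg h1, cvGap_of_ge hε (not_lt.1 h1)]
      by_cases h2 : |x - r₂| < ε
      · rw [if_pos h2]
        unfold cvGap
        rw [cvClamp_of_lt h2]
        push_cast
        ring
      · rw [if_neg h2, cvGap_of_ge hε (not_lt.1 h2)]
        push_cast
        ring

lemma cvGap_im_nonpos {ε : ℝ} (hε : 0 < ε) (y : ℝ) : (cvGap ε y).im ≤ 0 := by
  by_cases h : |y| < ε
  · exact (cvGap_im_neg hε h).le
  · rw [cvGap_of_ge hε (not_lt.1 h)]; simp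

lemma stmt16_core (θ r₁ r₂ ε c : ℝ) (hr₁ : 0 < r₁) (hr₂ : 0 < r₂)
    (hε : 0 < ε) (hε₁ : ε < r₁) (hε₂ : ε < r₂)
    (hsep : r₁ ≠ r₂ → 2 * ε < |r₁ - r₂|) (hc : c = r₁ ∨ c = r₂) :
    IntervalIntegrable (fun x =>
        (circumventPath r₁ r₂ ε θ x - (c : ℂ) * Complex.exp (θ * Complex.I))⁻¹
          * deriv (circumventPath r₁ r₂ ε θ) x) MeasureTheory.volume 0 (r₁ + r₂) ∧
    (∫ x in (0:ℝ)..(r₁ + r₂),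
        (circumventPath r₁ r₂ ε θ x - (c : ℂ) * Complex.exp (θ * Complex.I))⁻¹
          * deriv (circumventPath r₁ r₂ ε θ) x)
      = (Real.log ((r₁ + r₂ - c) / c) : ℂ) + Real.pi * Complex.I := by
  obtain ⟨k, hk0, hk1, hk, hγ⟩ := circumventPath_eq θ r₁ r₂ ε hε hsep
  set e : ℂ := Complex.exp (θ * Complex.I) with he
  have he0 : e ≠ 0 := Complex.exp_ne_zero _
  have hen : ‖e‖ = 1 := Complex.norm_exp_ofReal_mul_I θ
  set γ := circumventPath r₁ r₂ ε θ with hγdef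
  have hcont : Continuous γ := by
    rw [hγ]
    have := cvGap_continuous ε
    fun_prop
  set S : Set ℝ := {r₁ - ε, r₁ + ε, r₂ - ε, r₂ + ε} with hS
  have hSc : S.Countable := (Set.toFinite S).countable
  have hder : ∀ x, x ∉ S → ∃ d : ℂ, HasDerivAt γ d x ∧ ‖d‖ ≤ 7 := by
    intro x hx
    simp only [hS, Set.mem_insert_iff, Set.mem_singleton_iff, not_or] at hx
    obtain ⟨h1, h2, h3, h4⟩ := hx
    have a1 : |x - r₁| ≠ ε := by
      intro h
      rcases eq_or_eq_neg_of_abs_eq h with h | h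
      · exact h2 (by linarith)
      · exact h1 (by linarith)
    have a2 : |x - r₂| ≠ ε := by
      intro h
      rcases eq_or_eq_neg_of_abs_eq h with h | h
      · exact h4 (by linarith)
      · exact h3 (by linarith)
    obtain ⟨d1, hd1, hn1⟩ := cvGap_deriv hε a1
    obtain ⟨d2, hd2, hn2⟩ := cvGap_deriv hε a2
    refine ⟨e * (((1 : ℝ) : ℂ) + d1 + (k : ℂ) * d2), ?_, ?_⟩
    · rw [hγ]
      exact ((((hasDerivAt_id x).ofReal_comp).add (hd1.comp_sub_const x r₁)).add
        ((hd2.comp_sub_const x r₂).const_mul _)).const_mul _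
    · rw [norm_mul, hen, one_mul]
      have hkn : ‖(k : ℂ) * d2‖ ≤ 3 := by
        rw [norm_mul, Complex.norm_real, Real.norm_of_nonneg hk0]
        nlinarith [norm_nonneg d2]
      have h1' : ‖((1 : ℝ) : ℂ)‖ = 1 := by simp
      have := norm_add₃_le (a := ((1 : ℝ) : ℂ)) (b := d1) (c := (k : ℂ) * d2)
      linarith
  have hdint : IntervalIntegrable (deriv γ) MeasureTheory.volume 0 (r₁ + r₂) := by
    rw [intervalIntegrable_iff]
    refine MeasureTheory.Measure.integrableOn_of_bounded (M := 7) (by simp)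
      (measurable_deriv γ).aestronglyMeasurable ?_
    refine MeasureTheory.ae_restrict_of_ae ?_
    filter_upwards [hSc.ae_notMem MeasureTheory.volume] with x hx
    obtain ⟨d, hd, hn⟩ := hder x hx
    rw [hd.deriv]
    exact hn
  have hslit : ∀ x, Complex.I * ((γ x - (c : ℂ) * e) * e⁻¹) ∈ Complex.slitPlane := by
    intro x
    have hz : (γ x - (c : ℂ) * e) * e⁻¹
        = ((x - c : ℝ) : ℂ) + cvGap ε (x - r₁) + (k : ℂ) * cvGap ε (x - r₂) := by
      rw [hγ]; field_simp; push_cast; ring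
    rw [hz]
    have i1 := cvGap_im_nonpos hε (x - r₁)
    have i2 := cvGap_im_nonpos hε (x - r₂)
    rw [Complex.mem_slitPlane_iff]
    by_cases h1 : |x - r₁| < ε
    · left
      have := cvGap_im_neg hε h1
      simp
      nlinarith
    by_cases h2 : |x - r₂| < ε
    · left
      have hne : r₁ ≠ r₂ := by rintro rfl; exact h1 h2
      have := cvGap_im_neg hε h2
      rw [hk hne]
      simp
      linarith
    · right
      rw [cvGap_of_ge hε (not_lt.1 h1), cvGap_of_ge hε (not_lt.1 h2)]
      have : x - c ≠ 0 := by
        intro h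
        rcases hc with rfl | rfl
        · apply h1; rw [h]; simpa using hε
        · apply h2; rw [h]; simpa using hε
      simpa using this
  have hne : ∀ x, γ x - (c : ℂ) * e ≠ 0 := by
    intro x h
    have := Complex.slitPlane_ne_zero (hslit x)
    rw [h] at this
    simp at this
  have hint : IntervalIntegrable (fun x => (γ x - (c : ℂ) * e)⁻¹ * deriv γ x)
      MeasureTheory.volume 0 (r₁ + r₂) := by
    refine hdint.continuousOn_mul (Continuous.continuousOn ?_)
    exact (hcont.sub continuous_const).inv₀ hne
  refine ⟨hint, ?_⟩
  have hF := MeasureTheory.integral_eq_of_hasDerivAt_off_countable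
    (fun x => Complex.log (Complex.I * ((γ x - (c : ℂ) * e) * e⁻¹)))
    (fun x => (γ x - (c : ℂ) * e)⁻¹ * deriv γ x) (a := 0) (b := r₁ + r₂) hSc
    (Continuous.continuousOn (Continuous.clog (by fun_prop) hslit))
    (by
      intro x hx
      obtain ⟨d, hd, -⟩ := hder x hx.2
      have := (((hd.sub_const ((c : ℂ) * e)).mul_const e⁻¹).const_mul Complex.I).clog_real (hslit x)
      rw [hd.deriv]
      have hx0 := hne x
      have hI := Complex.I_ne_zero
      have heq : (γ x - (c : ℂ) * e)⁻¹ * d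
          = Complex.I * (d * e⁻¹) / (Complex.I * ((γ x - (c : ℂ) * e) * e⁻¹)) := by
        generalize γ x - (c : ℂ) * e = w at hx0
        field_simp
      rw [heq]
      exact this) hint
  rw [hF]
  have g0 : γ 0 = 0 := by
    rw [hγ]
    have h1 : ε ≤ |0 - r₁| := by rw [zero_sub, abs_neg, abs_of_pos hr₁]; exact hε₁.le
    have h2 : ε ≤ |0 - r₂| := by rw [zero_sub, abs_neg, abs_of_pos hr₂]; exact hε₂.le
    simp only [cvGap_of_ge hε h1, cvGap_of_ge hε h2]
    simp
  have g1 : γ (r₁ + r₂) = ((r₁ + r₂ : ℝ) : ℂ) * e := by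
    rw [hγ]
    have h1 : ε ≤ |r₁ + r₂ - r₁| := by rw [add_sub_cancel_left, abs_of_pos hr₂]; exact hε₂.le
    have h2 : ε ≤ |r₁ + r₂ - r₂| := by rw [add_sub_cancel_right, abs_of_pos hr₁]; exact hε₁.le
    simp only [cvGap_of_ge hε h1, cvGap_of_ge hε h2]
    ring
  have hc0 : 0 < c := by rcases hc with rfl | rfl <;> assumption
  have hd0 : 0 < r₁ + r₂ - c := by rcases hc with rfl | rfl <;> linarith
  have e0 : Complex.I * ((γ 0 - (c : ℂ) * e) * e⁻¹) = (c : ℂ) * (-Complex.I) := by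
    rw [g0]; field_simp; ring
  have e1 : Complex.I * ((γ (r₁ + r₂) - (c : ℂ) * e) * e⁻¹)
      = ((r₁ + r₂ - c : ℝ) : ℂ) * Complex.I := by
    rw [g1]; push_cast; field_simp
  simp only [e0, e1]
  rw [Complex.log_ofReal_mul hc0 (by simp), Complex.log_ofReal_mul hd0 (by simp),
    Complex.log_I, Complex.log_neg_I, Real.log_div hd0.ne' hc0.ne']
  push_cast
  ring

/-- With `ω₁ = r₁e^{iθ}`, `ω₂ = r₂e^{iθ}` and `γ₀` the path from `0` to
`ω = ω₁+ω₂` circumventing `ω₁` and `ω₂` by small anti-clockwise half-circles,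
one has `∫_{γ₀} dξ/(ξ-ω₁) = log(r₂/r₁) + iπ`, `∫_{γ₀} dξ/(ξ-ω₂) = log(r₁/r₂) + iπ`,
and hence `∫_{γ₀} (1/(ξ-ω₁) + 1/(ξ-ω₂)) dξ = 2πi`. -/
theorem stmt16 (θ r₁ r₂ ε : ℝ) (hr₁ : 0 < r₁) (hr₂ : 0 < r₂)
    (hε : 0 < ε) (hε₁ : ε < r₁) (hε₂ : ε < r₂)
    (hsep : r₁ ≠ r₂ → 2 * ε < |r₁ - r₂|) :
    (∫ x in (0:ℝ)..(r₁ + r₂),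
        (circumventPath r₁ r₂ ε θ x - (r₁ : ℂ) * Complex.exp (θ * Complex.I))⁻¹
          * deriv (circumventPath r₁ r₂ ε θ) x)
      = (Real.log (r₂ / r₁) : ℂ) + Real.pi * Complex.I ∧
    (∫ x in (0:ℝ)..(r₁ + r₂),
        (circumventPath r₁ r₂ ε θ x - (r₂ : ℂ) * Complex.exp (θ * Complex.I))⁻¹
          * deriv (circumventPath r₁ r₂ ε θ) x)
      = (Real.log (r₁ / r₂) : ℂ) + Real.pi * Complex.I ∧
    (∫ x in (0:ℝ)..(r₁ + r₂),
        ((circumventPath r₁ r₂ ε θ x - (r₁ : ℂ) * Complex.exp (θ * Complex.I))⁻¹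
          + (circumventPath r₁ r₂ ε θ x - (r₂ : ℂ) * Complex.exp (θ * Complex.I))⁻¹)
          * deriv (circumventPath r₁ r₂ ε θ) x)
      = 2 * Real.pi * Complex.I := by
  obtain ⟨i1, h1⟩ := stmt16_core θ r₁ r₂ ε r₁ hr₁ hr₂ hε hε₁ hε₂ hsep (Or.inl rfl)
  obtain ⟨i2, h2⟩ := stmt16_core θ r₁ r₂ ε r₂ hr₁ hr₂ hε hε₁ hε₂ hsep (Or.inr rfl)
  rw [add_sub_cancel_left] at h1
  rw [add_sub_cancel_right] at h2
  refine ⟨h1, h2, ?_⟩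
  simp only [add_mul]
  rw [intervalIntegral.integral_add i1 i2, h1, h2, Real.log_div hr₁.ne' hr₂.ne',
    Real.log_div hr₂.ne' hr₁.ne']
  push_cast
  ring
end
end

section
/- Let [a,b] be a compact interval, γ : [a,b] → ℂ a C¹ path, and X : ℂ × [a,b] → ℂ a non-autonomous vector field, continuous in (ζ,t) and locally Lipschitz in ζ, satisfying the symmetry relation X(γ(t)−ζ, t) = γ′(t) − X(ζ,t) for all ζ ∈ ℂ and t ∈ [a,b]. Then for any solution t ↦ ζ(t) of dζ/dt = X(ζ,t) on [a,b], the curve t ↦ ξ(t) := γ(t) − ζ(t) is also a solution of dξ/dt = X(ξ,t); consequently, denoting by Ψ_t := Φ^{a,t} the flow maps of X (assumed globally defined on [a,b]), one has Ψ_t(γ(a) − ζ) = γ(t) − Ψ_t(ζ) for all ζ ∈ ℂ and t ∈ [a,b]. -/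
open Set Metric Filter Topology

/-- Uniqueness of solutions for a locally Lipschitz field. -/
theorem aux_unique (a b : ℝ) (X : ℂ → ℝ → ℂ)
    (hlip : ∀ ζ₀ : ℂ, ∃ (K : NNReal) (ε : ℝ), 0 < ε ∧
      ∀ t ∈ Set.Icc a b, LipschitzOnWith K (fun ζ => X ζ t) (Metric.ball ζ₀ ε))
    (f g : ℝ → ℂ)
    (hf : ∀ t ∈ Set.Icc a b, HasDerivWithinAt f (X (f t) t) (Set.Icc a b) t)
    (hg : ∀ t ∈ Set.Icc a b, HasDerivWithinAt g (X (g t) t) (Set.Icc a b) t)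
    (h0 : f a = g a) : ∀ t ∈ Set.Icc a b, f t = g t := by
  have hfc : ContinuousOn f (Set.Icc a b) := fun t ht => (hf t ht).continuousWithinAt
  have hgc : ContinuousOn g (Set.Icc a b) := fun t ht => (hg t ht).continuousWithinAt
  have hcl : IsClosed ({t | f t = g t} ∩ Set.Icc a b) := by
    have h := (hfc.prodMk hgc).preimage_isClosed_of_isClosed isClosed_Icc
      (isClosed_diagonal (X := ℂ))
    rw [Set.inter_comm]
    exact h
  refine hcl.Icc_subset_of_forall_exists_gt h0 ?_
  rintro t ⟨htfg, hta, htb⟩ y hy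
  have hty : t < y := hy
  obtain ⟨K, ε, hε, hL⟩ := hlip (f t)
  have hsub : 𝓝[Set.Icc t b] t ≤ 𝓝[Set.Icc a b] t :=
    nhdsWithin_mono _ (Set.Icc_subset_Icc_left hta)
  have h1 : ∀ᶠ s in 𝓝[Set.Icc t b] t, f s ∈ Metric.ball (f t) ε :=
    ((hfc t ⟨hta, htb.le⟩).mono_left hsub) (Metric.ball_mem_nhds _ hε)
  have h2 : ∀ᶠ s in 𝓝[Set.Icc t b] t, g s ∈ Metric.ball (f t) ε := by
    have htfg' : f t = g t := htfg
    rw [htfg']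
    exact ((hgc t ⟨hta, htb.le⟩).mono_left hsub) (Metric.ball_mem_nhds _ hε)
  obtain ⟨δ, hδ, hball⟩ := Metric.mem_nhdsWithin_iff.1 (h1.and h2)
  set c := min (min y b) (t + δ / 2) with hc
  have htc : t < c := by
    simp only [hc, lt_min_iff]
    exact ⟨⟨hty, htb⟩, by linarith⟩
  have hcy : c ≤ y := (min_le_left _ _).trans (min_le_left _ _)
  have hcb : c ≤ b := (min_le_left _ _).trans (min_le_right _ _)
  have hcδ : c ≤ t + δ / 2 := min_le_right _ _
  have hin : ∀ s ∈ Set.Ico t c, f s ∈ Metric.ball (f t) ε ∧ g s ∈ Metric.ball (f t) ε := by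
    intro s hs
    refine hball ⟨?_, hs.1, hs.2.le.trans hcb⟩
    rw [Metric.mem_ball, Real.dist_eq, abs_lt]
    constructor <;> linarith [hs.1, hs.2]
  have hIcc : Set.Icc t c ⊆ Set.Icc a b := Set.Icc_subset_Icc hta hcb
  have hder : ∀ F : ℝ → ℂ,
      (∀ t ∈ Set.Icc a b, HasDerivWithinAt F (X (F t) t) (Set.Icc a b) t) →
      ∀ s ∈ Set.Ico t c, HasDerivWithinAt F (X (F s) s) (Set.Ici s) s := by
    intro F hF s hs
    refine (hF s (hIcc ⟨hs.1, hs.2.le⟩)).mono_of_mem_nhdsWithin ?_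
    exact mem_of_superset (Icc_mem_nhdsGE (hs.2.trans_le hcb))
      (Set.Icc_subset_Icc_left (hta.trans hs.1))
  have key := ODE_solution_unique_of_mem_Icc_right (v := fun s z => X z s)
    (s := fun _ => Metric.ball (f t) ε) (K := K)
    (fun s hs => hL s (hIcc ⟨hs.1, hs.2.le⟩))
    (hfc.mono hIcc) (hder f hf) (fun s hs => (hin s hs).1)
    (hgc.mono hIcc) (hder g hg) (fun s hs => (hin s hs).2) htfg
  exact ⟨c, key ⟨htc.le, le_rfl⟩, htc, hcy⟩

/-- If the non-autonomous vector field `X`, continuous in `(ζ,t)` and locally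
Lipschitz in `ζ`, satisfies the symmetry relation
`X(γ(t)-ζ, t) = γ'(t) - X(ζ,t)` with respect to a `C¹` path `γ`, then for any
solution `ζ(t)` of `X` the curve `γ(t) - ζ(t)` is again a solution; consequently,
the (globally defined) flow maps `Ψ_t = Φ^{a,t}` satisfy
`Ψ_t(γ(a) - ζ) = γ(t) - Ψ_t(ζ)`. -/
theorem stmt18 (a b : ℝ) (hab : a ≤ b) (γ γ' : ℝ → ℂ)
    (hγC1 : ContDiffOn ℝ 1 γ (Set.Icc a b))
    (hγ : ∀ t ∈ Set.Icc a b, HasDerivWithinAt γ (γ' t) (Set.Icc a b) t)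
    (X : ℂ → ℝ → ℂ)
    (hcont : Continuous fun p : ℂ × ℝ => X p.1 p.2)
    (hlip : ∀ ζ₀ : ℂ, ∃ (K : NNReal) (ε : ℝ), 0 < ε ∧
      ∀ t ∈ Set.Icc a b, LipschitzOnWith K (fun ζ => X ζ t) (Metric.ball ζ₀ ε))
    (hsym : ∀ ζ : ℂ, ∀ t ∈ Set.Icc a b, X (γ t - ζ) t = γ' t - X ζ t)
    (Φ : ℂ → ℝ → ℂ)
    (hΦinit : ∀ ζ : ℂ, Φ ζ a = ζ)
    (hΦsol : ∀ ζ : ℂ, ∀ t ∈ Set.Icc a b,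
      HasDerivWithinAt (Φ ζ) (X (Φ ζ t) t) (Set.Icc a b) t) :
    (∀ φ : ℝ → ℂ,
      (∀ t ∈ Set.Icc a b, HasDerivWithinAt φ (X (φ t) t) (Set.Icc a b) t) →
      ∀ t ∈ Set.Icc a b,
        HasDerivWithinAt (fun u => γ u - φ u) (X (γ t - φ t) t) (Set.Icc a b) t) ∧
    (∀ ζ : ℂ, ∀ t ∈ Set.Icc a b, Φ (γ a - ζ) t = γ t - Φ ζ t) := by
  have hA : ∀ φ : ℝ → ℂ,
      (∀ t ∈ Set.Icc a b, HasDerivWithinAt φ (X (φ t) t) (Set.Icc a b) t) →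
      ∀ t ∈ Set.Icc a b,
        HasDerivWithinAt (fun u => γ u - φ u) (X (γ t - φ t) t) (Set.Icc a b) t := by
    intro φ hφ t ht
    rw [hsym _ t ht]
    exact (hγ t ht).sub (hφ t ht)
  refine ⟨hA, fun ζ t ht => ?_⟩
  exact aux_unique a b X hlip (Φ (γ a - ζ)) (fun u => γ u - Φ ζ u) (hΦsol _)
    (hA _ (hΦsol ζ)) (by simp [hΦinit]) t ht
end
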